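/- Let F be the free group with basis {ξ, η}, let n₀ ≥ 1, and let γ ∈ F be an element whose reduced word contains at least one letter from {η, η⁻¹}. Then for all sufficiently large integers i, the element ξ^{i·n₀} γ² is not equal to p^n for any primitive element p of F and any integer n ≥ 1. In particular there are infinitely many i for which ξ^{i·n₀} γ² is not a power of any primitive element. -/

import Mathlib

/-- An element of the free group of rank 2 is primitive if it belongs to some free basis. -/
def IsPrimitive (p : FreeGroup Bool) : Prop :=
  ∃ b : FreeGroupBasis Bool (FreeGroup Bool), b true = p

namespace RankTwoFreeGroup

open FreeGroup (of lift)

/-- The exponent sum of the generator `s`, as a homomorphism. -/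
def exponentSum (s : Bool) : FreeGroup Bool →* Multiplicative ℤ :=
  lift (Pi.mulSingle s (Multiplicative.ofAdd 1))

theorem monoidHom_eq_exponentSum (f : FreeGroup Bool →* Multiplicative ℤ) (g : FreeGroup Bool) :
    (f g).toAdd = (exponentSum true g).toAdd * (f (of true)).toAdd
      + (exponentSum false g).toAdd * (f (of false)).toAdd := by
  have h : f = (zpowGroupHom (f (of true)).toAdd).comp (exponentSum true)
      * (zpowGroupHom (f (of false)).toAdd).comp (exponentSum false) := by
    ext s
    cases s <;> simp [exponentSum]
  conv_lhs => rw [h]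
  simp [mul_comm, add_comm]

theorem countP_toWord_of_true_zpow (z : ℤ) :
    ((of true : FreeGroup Bool) ^ z).toWord.countP (fun p => p.1 == false) = 0 := by
  rw [List.countP_eq_zero]
  obtain ⟨n, rfl | rfl⟩ := z.eq_nat_or_neg
  · simp [FreeGroup.toWord_of_pow, List.mem_replicate]
  · simp [FreeGroup.toWord_of_pow, FreeGroup.toWord_inv, FreeGroup.invRev, List.mem_replicate]

/-- The action of the free group on `ℂ` in which the first generator acts by
`z ↦ exp A * z` and the second by `z ↦ exp B * z + 1`. -/
noncomputable def affineAction (A B : ℂ) : FreeGroup Bool →* Equiv.Perm ℂ :=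
  lift fun s => bif s then Equiv.mulLeft₀ (Complex.exp A) (Complex.exp_ne_zero A)
    else (Equiv.mulLeft₀ (Complex.exp B) (Complex.exp_ne_zero B)).trans (Equiv.addRight 1)

theorem affineAction_of_true (A B z : ℂ) :
    affineAction A B (of true) z = Complex.exp A * z := by
  simp [affineAction]

theorem affineAction_of_false (A B z : ℂ) :
    affineAction A B (of false) z = Complex.exp B * z + 1 := by
  simp [affineAction]

theorem exists_affineAction_eq (A B : ℂ) (g : FreeGroup Bool) :
    ∃ t : ℂ, ∀ z, affineAction A B g z =
      Complex.exp ((exponentSum true g).toAdd * A + (exponentSum false g).toAdd * B) * z + t := by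
  induction g using FreeGroup.induction_on with
  | C1 => exact ⟨0, by simp⟩
  | of s => cases s
            · exact ⟨1, by simp [affineAction_of_false, exponentSum]⟩
            · exact ⟨0, by simp [affineAction_of_true, exponentSum]⟩
  | inv_of s ih =>
    obtain ⟨t, ht⟩ := ih
    refine ⟨-Complex.exp (-((exponentSum true (of s)).toAdd * A
      + (exponentSum false (of s)).toAdd * B)) * t, fun z => ?_⟩
    rw [map_inv, Equiv.Perm.inv_eq_iff_eq, ht]
    simp only [map_inv, toAdd_inv, Int.cast_neg, neg_mul, ← neg_add, Complex.exp_neg]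
    field_simp
    ring
  | mul g h ihg ihh =>
    obtain ⟨t, ht⟩ := ihg
    obtain ⟨u, hu⟩ := ihh
    refine ⟨Complex.exp ((exponentSum true g).toAdd * A
      + (exponentSum false g).toAdd * B) * u + t, fun z => ?_⟩
    simp only [map_mul, Equiv.Perm.mul_apply, hu, ht, toAdd_mul, Int.cast_add, add_mul,
      Complex.exp_add]
    ring

/-- A homomorphism that kills a primitive element has commutative image. -/
theorem commute_map_of_isPrimitive {G : Type*} [Group G] {p : FreeGroup Bool}
    (hp : IsPrimitive p) (f : FreeGroup Bool →* G) (hf : f p = 1) (g h : FreeGroup Bool) :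
    Commute (f g) (f h) := by
  obtain ⟨b, rfl⟩ := hp
  have key : ∀ g, ∃ n : ℤ, f g = f (b false) ^ n := by
    intro g
    refine ⟨(exponentSum false (b.repr g)).toAdd, ?_⟩
    have : f = (zpowersHom G (f (b false))).comp ((exponentSum false).comp b.repr.toMonoidHom) := by
      refine b.ext_hom _ _ fun s => ?_
      cases s <;> simp [exponentSum, hf]
    conv_lhs => rw [this]
    simp
  obtain ⟨m, hm⟩ := key g
  obtain ⟨n, hn⟩ := key h
  rw [hm, hn]
  exact Commute.zpow_zpow_self _ _ _

theorem isUnit_exponentSum_of_isPrimitive {p : FreeGroup Bool} (hp : IsPrimitive p)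
    (h : (exponentSum false p).toAdd = 0) : IsUnit (exponentSum true p).toAdd := by
  obtain ⟨b, rfl⟩ := hp
  have := monoidHom_eq_exponentSum ((exponentSum true).comp b.repr.toMonoidHom) (b true)
  rw [h] at this
  rw [zero_mul, add_zero] at this
  refine IsUnit.of_mul_eq_one _ (this.symm.trans ?_)
  simp [exponentSum]

theorem exponentSum_of_pow_mul_sq_eq_pow {γ p : FreeGroup Bool} {k n : ℕ}
    (h : of true ^ k * γ ^ 2 = p ^ n) :
    (k : ℤ) + 2 * (exponentSum true γ).toAdd = n * (exponentSum true p).toAdd ∧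
    2 * (exponentSum false γ).toAdd = n * (exponentSum false p).toAdd := by
  have h1 := congrArg (fun g => (exponentSum true g).toAdd) h
  have h2 := congrArg (fun g => (exponentSum false g).toAdd) h
  simp only [map_mul, map_pow, toAdd_mul, toAdd_pow] at h1 h2
  simpa [exponentSum] using And.intro h1 h2

theorem pow_mul_sq_ne_pow_of_exponentSum_ne_zero {γ p : FreeGroup Bool} {k n : ℕ}
    (hγ : (exponentSum false γ).toAdd ≠ 0) (hk : 2 ≤ k) (hp : IsPrimitive p) (hn : 1 ≤ n) :
    of true ^ k * γ ^ 2 ≠ p ^ n := by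
  intro h
  obtain ⟨h1, h2⟩ := exponentSum_of_pow_mul_sq_eq_pow h
  set a := (exponentSum true γ).toAdd with ha
  set b := (exponentSum false γ).toAdd with hb
  set α := (exponentSum true p).toAdd with hα
  set β := (exponentSum false p).toAdd with hβ
  have hk0 : (k : ℂ) ≠ 0 := by norm_cast; lia
  have hn0 : (n : ℂ) ≠ 0 := by norm_cast; lia
  have hb0 : (b : ℂ) ≠ 0 := by exact_mod_cast hγ
  have h1' : (k : ℂ) + 2 * a = n * α := by exact_mod_cast h1
  have h2' : (2 : ℂ) * b = n * β := by exact_mod_cast h2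
  set A : ℂ := 2 * Real.pi * Complex.I / k with hA
  set B : ℂ := -((k + 2 * a) * (Real.pi * Complex.I / k)) / b with hB
  have hAk : k * A = 2 * Real.pi * Complex.I := by rw [hA]; field_simp
  have hγAB : a * A + b * B = -(Real.pi * Complex.I) := by
    rw [hA, hB]; field_simp; ring
  have hpAB : α * A + β * B = 0 := by
    refine (mul_eq_zero.mp (?_ : (n : ℂ) * (α * A + β * B) = 0)).resolve_left hn0
    rw [mul_add, ← mul_assoc, ← mul_assoc, ← h1', ← h2', hA, hB]
    field_simp
    ring
  have hξ : affineAction A B (of true) ^ k = 1 := by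
    ext z
    have : ∀ m : ℕ, (affineAction A B (of true) ^ m) z = Complex.exp (m * A) * z := by
      intro m
      induction m with
      | zero => simp
      | succ m ih =>
        rw [pow_succ', Equiv.Perm.mul_apply, ih, affineAction_of_true]
        push_cast
        rw [add_mul, Complex.exp_add, one_mul]
        ring
    rw [this, hAk, Complex.exp_two_pi_mul_I]
    simp
  have hγ2 : affineAction A B γ ^ 2 = 1 := by
    obtain ⟨t, ht⟩ := exists_affineAction_eq A B γ
    rw [← ha, ← hb, hγAB, Complex.exp_neg, Complex.exp_pi_mul_I] at ht
    ext z
    rw [pow_two, Equiv.Perm.mul_apply, ht, ht]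
    norm_num
  have hp1 : affineAction A B p = 1 := by
    obtain ⟨t, ht⟩ := exists_affineAction_eq A B p
    rw [← hα, ← hβ, hpAB, Complex.exp_zero] at ht
    have hpow : ∀ m : ℕ, (affineAction A B p ^ m) 0 = m * t := by
      intro m
      induction m with
      | zero => simp
      | succ m ih =>
        rw [pow_succ', Equiv.Perm.mul_apply, ih, ht]
        push_cast
        ring
    have ht0 : (n : ℂ) * t = 0 := by
      rw [← hpow, ← map_pow, ← h, map_mul, map_pow, map_pow, hξ, hγ2]
      simp
    ext z
    simp [ht, (mul_eq_zero.mp ht0).resolve_left hn0]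
  have hcomm := congrArg (fun e : Equiv.Perm ℂ => e 0)
    (commute_map_of_isPrimitive hp _ hp1 (of true) (of false)).eq
  simp only [Equiv.Perm.mul_apply, affineAction_of_true, affineAction_of_false, mul_zero, zero_add,
    mul_one] at hcomm
  exact (Complex.isPrimitiveRoot_exp k (by lia)).ne_one (by lia) hcomm
section Representation

open Polynomial

/-- The unit `1 + N X` of `R[X]` attached to an element `N` of square zero. -/
noncomputable def oneAddMulX {R : Type*} [Ring R] (N : R) (hN : N * N = 0) : R[X]ˣ where
  val := 1 + C N * X
  inv := 1 - C N * X
  val_inv := by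
    have : C N * X * (C N * X) = 0 := by
      rw [mul_assoc, ← mul_assoc X, X_mul_C, ← mul_assoc, ← mul_assoc, ← C_mul, hN]; simp
    simp only [mul_sub, add_mul, one_mul, mul_one, this]
    abel
  inv_val := by
    have : C N * X * (C N * X) = 0 := by
      rw [mul_assoc, ← mul_assoc X, X_mul_C, ← mul_assoc, ← mul_assoc, ← C_mul, hN]; simp
    simp only [mul_add, sub_mul, one_mul, mul_one, this]
    abel

/-- The elementary square-zero endomorphisms of `ℤ × ℤ`. -/
def elementaryNilpotent (s : Bool) : Module.End ℤ (ℤ × ℤ) :=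
  bif s then LinearMap.inl ℤ ℤ ℤ ∘ₗ LinearMap.snd ℤ ℤ ℤ
  else LinearMap.inr ℤ ℤ ℤ ∘ₗ LinearMap.fst ℤ ℤ ℤ

theorem elementaryNilpotent_mul_self (s : Bool) :
    elementaryNilpotent s * elementaryNilpotent s = 0 := by
  cases s <;> ext <;> simp [elementaryNilpotent]

/-- The representation sending the generators to `1 + N X` for the two elementary
square-zero endomorphisms `N` of `ℤ × ℤ`. -/
noncomputable def unipotentRep : FreeGroup Bool →* (Module.End ℤ (ℤ × ℤ))[X]ˣ :=
  lift fun s => oneAddMulX (elementaryNilpotent s) (elementaryNilpotent_mul_self s)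

/-- Evaluation at `2`. -/
noncomputable def evalTwo : (Module.End ℤ (ℤ × ℤ))[X] →+* Module.End ℤ (ℤ × ℤ) :=
  eval₂RingHom' (RingHom.id _) 2 fun a => Commute.ofNat_right a 2

theorem evalTwo_oneAddMulX_zpow (s : Bool) (n : ℤ) :
    ((Units.map evalTwo.toMonoidHom
      (oneAddMulX (elementaryNilpotent s) (elementaryNilpotent_mul_self s))) ^ n :
      (Module.End ℤ (ℤ × ℤ))ˣ) = 1 + (2 * n) • elementaryNilpotent s := by
  set u := Units.map evalTwo.toMonoidHom
      (oneAddMulX (elementaryNilpotent s) (elementaryNilpotent_mul_self s)) with hu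
  have h1 : (u : Module.End ℤ (ℤ × ℤ)) = 1 + (2 : ℤ) • elementaryNilpotent s := by
    simp [hu, oneAddMulX, evalTwo, eval₂RingHom', (Commute.ofNat_right (elementaryNilpotent s) 2).eq]
  have h2 : ((u⁻¹ : _ˣ) : Module.End ℤ (ℤ × ℤ)) = 1 - (2 : ℤ) • elementaryNilpotent s := by
    simp [hu, oneAddMulX, evalTwo, eval₂RingHom', (Commute.ofNat_right (elementaryNilpotent s) 2).eq]
  induction n with
  | zero => simp
  | succ n ih =>
    rw [zpow_add_one, Units.val_mul, ih, h1]
    simp only [mul_add, add_mul, smul_mul_smul_comm, elementaryNilpotent_mul_self, mul_one, one_mul,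
      smul_zero]
    module
  | pred n ih =>
    rw [zpow_sub_one, Units.val_mul, ih, h2]
    simp only [mul_sub, add_mul, smul_mul_smul_comm, elementaryNilpotent_mul_self, mul_one, one_mul,
      smul_zero]
    module

theorem injective_unipotentRep : Function.Injective unipotentRep := by
  let f : Bool → (Module.End ℤ (ℤ × ℤ))ˣ := fun s => Units.map evalTwo.toMonoidHom
      (oneAddMulX (elementaryNilpotent s) (elementaryNilpotent_mul_self s))
  suffices h : Function.Injective ((Units.map evalTwo.toMonoidHom).comp unipotentRep) from
    Function.Injective.of_comp (f := Units.map evalTwo.toMonoidHom) h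
  have : (Units.map evalTwo.toMonoidHom).comp unipotentRep =
      (Monoid.CoprodI.lift fun s => FreeGroup.lift fun _ : Unit => f s).comp
        (freeGroupEquivCoprodI (ι := Bool)).toMonoidHom := by
    ext s : 1
    simp [f, unipotentRep]
  rw [this, MonoidHom.coe_comp]
  refine Function.Injective.comp ?_ freeGroupEquivCoprodI.injective
  let S : Bool → Set (ℤ × ℤ) := fun s => {v | bif s then |v.2| < |v.1| else |v.1| < |v.2|}
  refine Monoid.CoprodI.lift_injective_of_ping_pong _ (Or.inr ⟨true, ?_⟩) S ?_ ?_ ?_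
  · exact (Cardinal.natCast_lt_aleph0 (n := 3)).le.trans (Cardinal.aleph0_le_mk _)
  · rintro (_ | _)
    · exact ⟨(0, 1), by simp [S]⟩
    · exact ⟨(1, 0), by simp [S]⟩
  · rintro (_ | _) (_ | _) hst
    · exact absurd rfl hst
    · exact Set.disjoint_left.mpr fun v hv hw => lt_asymm (α := ℤ) hv hw
    · exact Set.disjoint_left.mpr fun v hv hw => lt_asymm (α := ℤ) hv hw
    · exact absurd rfl hst
  · have hmain : ∀ x y n : ℤ, n ≠ 0 → |x| < |y| → |y| < |x + 2 * n * y| := by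
      intro x y n hn hxy
      have h1 : |y| ≤ |n * y| := by
        rw [abs_mul]
        exact le_mul_of_one_le_left (abs_nonneg y) (Int.one_le_abs hn)
      have h2 : |2 * n * y| = 2 * |n * y| := by rw [mul_assoc, abs_mul]; rfl
      have h3 : |2 * n * y| ≤ |x + 2 * n * y| + |x| := by
        simpa using abs_sub (x + 2 * n * y) x
      lia
    rintro s t hst g hg
    obtain ⟨n, rfl⟩ : ∃ n : ℤ, g = of () ^ n := ⟨FreeGroup.freeGroupUnitEquivInt g,
      (FreeGroup.freeGroupUnitEquivInt.left_inv g).symm⟩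
    have hn : n ≠ 0 := by rintro rfl; simp at hg
    rintro _ ⟨⟨x, y⟩, hv, rfl⟩
    simp only [_root_.map_zpow, FreeGroup.lift_apply_of, Units.smul_def]
    change (((f s ^ n : (Module.End ℤ (ℤ × ℤ))ˣ) : Module.End ℤ (ℤ × ℤ)) (x, y)) ∈ S s
    rw [evalTwo_oneAddMulX_zpow]
    cases s <;> cases t
    · exact absurd rfl hst
    · simpa [S, elementaryNilpotent, mul_assoc] using hmain y x n hn hv
    · simpa [S, elementaryNilpotent, mul_assoc] using hmain x y n hn hv
    · exact absurd rfl hst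

/-- The polynomial `f` has the form `1 + m X ^ i + ⋯`. -/
def HasLeading {R : Type*} [Ring R] (f : R[X]) (i : ℕ) (m : R) : Prop :=
  ∃ h : R[X], f = 1 + X ^ i * h ∧ h.coeff 0 = m

namespace HasLeading

variable {R : Type*} [Ring R] {f g : R[X]} {i : ℕ} {m m' : R}

theorem mul (hi : i ≠ 0) (hf : HasLeading f i m) (hg : HasLeading g i m') :
    HasLeading (f * g) i (m + m') := by
  obtain ⟨a, rfl, rfl⟩ := hf
  obtain ⟨b, rfl, rfl⟩ := hg
  refine ⟨a + b + X ^ i * a * b, ?_, ?_⟩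
  · have : X ^ i * a * (X ^ i * b) = X ^ i * (X ^ i * a * b) := by
      rw [mul_assoc (X ^ i) a, ← mul_assoc a, ← X_pow_mul (p := a)]
    simp only [mul_add, add_mul, this, mul_one, one_mul]
    abel
  · simp [mul_coeff_zero, hi.symm]

theorem conj (u : R[X]ˣ) (hu : (u : R[X]).coeff 0 = 1) (hf : HasLeading f i m) :
    HasLeading ((u : R[X]) * f * ((u⁻¹ : R[X]ˣ) : R[X])) i m := by
  obtain ⟨a, rfl, rfl⟩ := hf
  refine ⟨(u : R[X]) * a * ((u⁻¹ : R[X]ˣ) : R[X]), ?_, ?_⟩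
  · have : (u : R[X]) * (X ^ i * a) = X ^ i * ((u : R[X]) * a) := by
      rw [← mul_assoc, ← X_pow_mul, mul_assoc]
    simp only [mul_add, add_mul, this, mul_one, Units.mul_inv, mul_assoc]
  · have h := congrArg (fun q => coeff q 0) u.mul_inv
    simp only [mul_coeff_zero, hu, one_mul, coeff_one_zero] at h
    simp [mul_coeff_zero, hu, h]

theorem unique (hf : HasLeading f i m) (hf' : HasLeading f i m') : m = m' := by
  obtain ⟨a, rfl, rfl⟩ := hf
  obtain ⟨b, hb, rfl⟩ := hf'
  have := congrArg (fun q => coeff q i) hb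
  simpa [coeff_X_pow_mul'] using this

theorem succ (hf : HasLeading f i 0) : ∃ m, HasLeading f (i + 1) m := by
  obtain ⟨a, rfl, ha⟩ := hf
  obtain ⟨b, rfl⟩ := X_dvd_iff.mpr ha
  exact ⟨_, b, by rw [pow_succ, mul_assoc], rfl⟩

theorem zero_of_lt {j : ℕ} (hf : HasLeading f j m) (hij : i < j) : HasLeading f i 0 := by
  obtain ⟨a, rfl, -⟩ := hf
  refine ⟨X ^ (j - i) * a, ?_, ?_⟩
  · rw [← mul_assoc, ← pow_add, Nat.add_sub_cancel' hij.le]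
  · simp [mul_coeff_zero, (Nat.sub_pos_of_lt hij).ne]

theorem exists_one (hf : f.coeff 0 = 1) : ∃ m, HasLeading f 1 m := by
  obtain ⟨b, hb⟩ := X_dvd_iff.mpr (show (f - 1).coeff 0 = 0 by simp [hf])
  exact ⟨_, b, by rw [pow_one, ← hb]; abel, rfl⟩

theorem exists_ne_zero (hf : f.coeff 0 = 1) (hf1 : f ≠ 1) :
    ∃ i ≠ 0, ∃ m ≠ 0, HasLeading f i m := by
  by_contra! H
  have key : ∀ i, ∃ m, HasLeading f (i + 1) m := by
    intro i
    induction i with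
    | zero => exact exists_one hf
    | succ i ih =>
      obtain ⟨m, hm⟩ := ih
      have : m = 0 := by
        by_contra h
        exact H _ i.succ_ne_zero m h hm
      exact succ (this ▸ hm)
  apply hf1
  ext d
  obtain ⟨m, h, rfl, -⟩ := key d
  simp [coeff_X_pow_mul']

end HasLeading

theorem coeff_zero_unipotentRep (g : FreeGroup Bool) :
    (unipotentRep g : (Module.End ℤ (ℤ × ℤ))[X]).coeff 0 = 1 := by
  have : (Units.map (constantCoeff (R := Module.End ℤ (ℤ × ℤ))).toMonoidHom).comp unipotentRep =
      1 := by
    ext s : 2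
    simp [unipotentRep, oneAddMulX]
  simpa using congrArg Units.val (DFunLike.congr_fun this g)

theorem hasLeading_conj_unipotentRep (h : FreeGroup Bool) {g : FreeGroup Bool} {i : ℕ}
    {m : Module.End ℤ (ℤ × ℤ)}
    (hg : HasLeading (unipotentRep g : (Module.End ℤ (ℤ × ℤ))[X]) i m) :
    HasLeading (unipotentRep (h * g * h⁻¹) : (Module.End ℤ (ℤ × ℤ))[X]) i m := by
  simpa using hg.conj (unipotentRep h) (coeff_zero_unipotentRep h)

theorem hasLeading_mul_pow_unipotentRep (x : FreeGroup Bool) {u : FreeGroup Bool} {i : ℕ}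
    (hi : i ≠ 0) {m : Module.End ℤ (ℤ × ℤ)}
    (hu : HasLeading (unipotentRep u : (Module.End ℤ (ℤ × ℤ))[X]) i m) (n : ℕ) :
    HasLeading (unipotentRep ((x * u) ^ n * (x ^ n)⁻¹) : (Module.End ℤ (ℤ × ℤ))[X]) i (n • m) := by
  induction n with
  | zero => exact ⟨0, by simp, by simp⟩
  | succ n ih =>
    have h := (hasLeading_conj_unipotentRep x hu).mul hi (hasLeading_conj_unipotentRep x ih)
    rw [← Units.val_mul, ← map_mul] at h
    convert h using 3
    · rw [pow_succ' (x * u), pow_succ' x]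
      group
    · rw [succ_nsmul']

theorem hasLeading_zpow_mul_sq_unipotentRep (x : FreeGroup Bool) {c : FreeGroup Bool} {i : ℕ}
    (hi : i ≠ 0) {m : Module.End ℤ (ℤ × ℤ)}
    (hc : HasLeading (unipotentRep c : (Module.End ℤ (ℤ × ℤ))[X]) i m) (k a : ℤ) :
    HasLeading (unipotentRep (x ^ k * (x ^ a * c) ^ 2 * (x ^ (k + 2 * a))⁻¹) :
      (Module.End ℤ (ℤ × ℤ))[X]) i (2 • m) := by
  have h := (hasLeading_conj_unipotentRep (x ^ (k + a)) hc).mul hi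
    (hasLeading_conj_unipotentRep (x ^ (k + 2 * a)) hc)
  rw [← Units.val_mul, ← map_mul] at h
  convert h using 3
  · rw [pow_two]
    group
  · rw [two_nsmul]

/-- If `x ^ k * (x ^ a * c) ^ 2` is a `(k + 2 * a)`-th power and `c ≠ 1`, then `k + 2 * a` is
bounded in terms of `c`. -/
theorem exists_bound_of_zpow_mul_sq_eq_pow (c : FreeGroup Bool) (hc : c ≠ 1) :
    ∃ N : ℕ, ∀ (x p : FreeGroup Bool) (k a : ℤ) (n : ℕ), k + 2 * a = n →
      x ^ k * (x ^ a * c) ^ 2 = p ^ n → n ≤ N := by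
  obtain ⟨j, hj, m, hm, hcm⟩ := HasLeading.exists_ne_zero (coeff_zero_unipotentRep c)
    (fun h => hc (injective_unipotentRep (Units.ext (by simpa using h))))
  obtain ⟨v, hv⟩ : ∃ v, m v ≠ 0 := by
    by_contra! h
    exact hm (LinearMap.ext h)
  refine ⟨2 * ((m v).1.natAbs + (m v).2.natAbs), fun x p k a n hn h => ?_⟩
  by_cases hn0 : n = 0
  · simp [hn0]
  have hcompare : ∀ i ≠ 0, ∀ m₁ m₂,
      HasLeading (unipotentRep (x⁻¹ * p) : (Module.End ℤ (ℤ × ℤ))[X]) i m₁ →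
      HasLeading (unipotentRep c : (Module.End ℤ (ℤ × ℤ))[X]) i m₂ → n • m₁ = 2 • m₂ := by
    intro i hi m₁ m₂ h₁ h₂
    have h₁' := hasLeading_mul_pow_unipotentRep x hi h₁ n
    have h₂' := hasLeading_zpow_mul_sq_unipotentRep x hi h₂ k a
    rw [h, hn, zpow_natCast] at h₂'
    rw [mul_inv_cancel_left] at h₁'
    exact h₁'.unique h₂'
  have hbelow : ∀ i < j, ∃ m₁,
      HasLeading (unipotentRep (x⁻¹ * p) : (Module.End ℤ (ℤ × ℤ))[X]) (i + 1) m₁ := by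
    intro i
    induction i with
    | zero => exact fun _ => HasLeading.exists_one (coeff_zero_unipotentRep _)
    | succ i ih =>
      intro hij
      obtain ⟨m₁, h₁⟩ := ih (by lia)
      have h0 := hcompare _ i.succ_ne_zero m₁ 0 h₁ (hcm.zero_of_lt hij)
      rw [smul_zero] at h0
      have h0' : m₁ = 0 := by
        refine LinearMap.ext fun w => ?_
        have hw := congrArg (fun f => f w) h0
        exact (smul_eq_zero.mp hw).resolve_left hn0
      exact HasLeading.succ (h0' ▸ h₁)
  obtain ⟨m₁, h₁⟩ := hbelow (j - 1) (by lia)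
  rw [Nat.sub_add_cancel (by lia)] at h₁
  have hmain : n • m₁ v = 2 • m v := congrArg (fun f => f v) (hcompare j hj m₁ m h₁ hcm)
  have hfst : (n : ℤ) * (m₁ v).1 = (2 : ℕ) * (m v).1 := by
    simpa using congrArg Prod.fst hmain
  have hsnd : (n : ℤ) * (m₁ v).2 = (2 : ℕ) * (m v).2 := by
    simpa using congrArg Prod.snd hmain
  have hle : ∀ y z : ℤ, (n : ℤ) * y = (2 : ℕ) * z → z ≠ 0 → n ≤ 2 * z.natAbs := by
    intro y z hyz hz
    have := congrArg Int.natAbs hyz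
    rw [Int.natAbs_mul, Int.natAbs_mul, Int.natAbs_natCast, Int.natAbs_natCast] at this
    exact Nat.le_of_dvd (by lia) ⟨_, this.symm⟩
  by_cases h1 : (m v).1 = 0
  · have h2 : (m v).2 ≠ 0 := fun h2 => hv (Prod.ext h1 h2)
    exact (hle _ _ hsnd h2).trans (by lia)
  · exact (hle _ _ hfst h1).trans (by lia)

end Representation

end RankTwoFreeGroup

/-- In the free group on `ξ = of true`, `η = of false`: if `n₀ ≥ 1` and the reduced word of `γ`
contains a letter `η^{±1}`, then for all sufficiently large `i` the element `ξ^{i n₀} γ²` is not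
a positive power of a primitive element; in particular this holds for infinitely many `i`. -/
theorem eventually_not_power_of_primitive (n₀ : ℕ) (h₀ : 1 ≤ n₀) (γ : FreeGroup Bool)
    (hγ : 1 ≤ γ.toWord.countP (fun p => p.1 == false)) :
    (∃ I : ℕ, ∀ i : ℕ, I ≤ i → ∀ p : FreeGroup Bool, IsPrimitive p →
      ∀ n : ℕ, 1 ≤ n → (FreeGroup.of true) ^ (i * n₀) * γ ^ 2 ≠ p ^ n) ∧
    {i : ℕ | ∀ p : FreeGroup Bool, IsPrimitive p →
      ∀ n : ℕ, 1 ≤ n → (FreeGroup.of true) ^ (i * n₀) * γ ^ 2 ≠ p ^ n}.Infinite := by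
  suffices h : ∃ I : ℕ, ∀ i : ℕ, I ≤ i → ∀ p : FreeGroup Bool, IsPrimitive p →
      ∀ n : ℕ, 1 ≤ n → (FreeGroup.of true) ^ (i * n₀) * γ ^ 2 ≠ p ^ n by
    refine ⟨h, ?_⟩
    obtain ⟨I, hI⟩ := h
    exact (Set.Ici_infinite I).mono hI
  have hle : ∀ i, i ≤ i * n₀ := fun i => Nat.le_mul_of_pos_right i h₀
  by_cases hb : (RankTwoFreeGroup.exponentSum false γ).toAdd = 0
  · set a := (RankTwoFreeGroup.exponentSum true γ).toAdd with ha
    obtain ⟨N, hN⟩ := RankTwoFreeGroup.exists_bound_of_zpow_mul_sq_eq_pow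
      ((FreeGroup.of true ^ a)⁻¹ * γ) (fun h => by
        have := RankTwoFreeGroup.countP_toWord_of_true_zpow a
        rw [← inv_mul_eq_one.mp h] at hγ
        lia)
    refine ⟨2 * a.natAbs + N + 1, fun i hi p hp n hn h => ?_⟩
    obtain ⟨h1, h2⟩ := RankTwoFreeGroup.exponentSum_of_pow_mul_sq_eq_pow h
    have hβ : (RankTwoFreeGroup.exponentSum false p).toAdd = 0 := by
      rw [hb, mul_zero] at h2
      exact (mul_eq_zero.mp h2.symm).resolve_left (by lia)
    have hi' := hle i
    rw [← ha] at h1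
    rcases Int.isUnit_iff.mp (RankTwoFreeGroup.isUnit_exponentSum_of_isPrimitive hp hβ) with hα | hα
    · rw [hα, mul_one] at h1
      have := hN (FreeGroup.of true) p _ a n h1
        (by rw [mul_inv_cancel_left, zpow_natCast, h])
      lia
    · lia
  · exact ⟨2, fun i hi p hp n hn =>
      RankTwoFreeGroup.pow_mul_sq_ne_pow_of_exponentSum_ne_zero hb (hi.trans (hle i)) hp hn⟩
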